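/- arXiv:1604.04741 — 3 statements merged into one kernel-verified Lean document; each statement's English description precedes it below -/
import Mathlib

section
/- Let b > 0, T > 0, and 0 < A ≤ 1 be real numbers, and define f : (0, A) → ℝ by f(x) = x·log(x/b) − b·log x − T·log(A − x) + (A − x)·log((A − x)/T). Then f is strictly convex on the interval (0, A). -/
open Real

/-- The one-dimensional function arising from the aggregated symmetric KL constraint,
`f x = x·log(x/b) − b·log x − T·log(A − x) + (A − x)·log((A − x)/T)`,
is strictly convex on the interval `(0, A)`. -/
theorem f_strictConvexOn
    (b T A : ℝ) (hb : 0 < b) (hT : 0 < T) (hA0 : 0 < A) (hA1 : A ≤ 1)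
    (f : ℝ → ℝ)
    (hf : ∀ x, f x = x * Real.log (x / b) - b * Real.log x -
        T * Real.log (A - x) + (A - x) * Real.log ((A - x) / T)) :
    StrictConvexOn ℝ (Set.Ioo 0 A) f := by
  have key : ∀ x ∈ Set.Ioo 0 A, f x = x * Real.log x - x * Real.log b - b * Real.log x -
      T * Real.log (A - x) + ((A - x) * Real.log (A - x) - (A - x) * Real.log T) := by
    intro x hx
    have h1 : x ≠ 0 := hx.1.ne'
    have h2 : A - x ≠ 0 := (sub_pos.2 hx.2).ne'
    rw [hf, Real.log_div h1 hb.ne', Real.log_div h2 hT.ne']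
    ring
  refine ⟨convex_Ioo 0 A, ?_⟩
  intro x hx y hy hxy p q hp hq hpq
  have hz := convex_Ioo 0 A hx hy hp.le hq.le hpq
  have hx' : 0 < A - x := sub_pos.2 hx.2
  have hy' : 0 < A - y := sub_pos.2 hy.2
  have hxy' : A - x ≠ A - y := fun h => hxy (by linarith)
  have e : A - (p * x + q * y) = p * (A - x) + q * (A - y) := by
    linear_combination (-A) * hpq
  have a1 := Real.strictConvexOn_mul_log.2 (Set.mem_Ici.2 hx.1.le) (Set.mem_Ici.2 hy.1.le)
    hxy hp hq hpq
  have a2 := Real.strictConvexOn_mul_log.2 (Set.mem_Ici.2 hx'.le) (Set.mem_Ici.2 hy'.le)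
    hxy' hp hq hpq
  have a3 := mul_lt_mul_of_pos_left
    (strictConcaveOn_log_Ioi.2 (Set.mem_Ioi.2 hx.1) (Set.mem_Ioi.2 hy.1) hxy hp hq hpq) hb
  have a4 := mul_lt_mul_of_pos_left
    (strictConcaveOn_log_Ioi.2 (Set.mem_Ioi.2 hx') (Set.mem_Ioi.2 hy') hxy' hp hq hpq) hT
  rw [key _ hz, key x hx, key y hy]
  simp only [smul_eq_mul] at a1 a2 a3 a4 ⊢
  rw [e]
  linarith
end

section
/- Let b > 0, T > 0, and 0 < A ≤ 1 be real numbers, and define f : (0, A) → ℝ by f(x) = x·log(x/b) − b·log x − T·log(A − x) + (A − x)·log((A − x)/T). Then for every real number c, the equation f(x) = c has at most two solutions x in the interval (0, A). -/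
open Real

theorem g_strict (k : ℝ) (hk : 0 < k) :
    StrictConvexOn ℝ (Set.Ioi 0) (fun x : ℝ => x * Real.log (x / k) - k * Real.log x) := by
  refine ⟨convex_Ioi 0, ?_⟩
  intro x hx y hy hxy s t hs ht hst
  have h1 := Real.strictConvexOn_mul_log.2 (Set.mem_Ici.2 (le_of_lt hx))
    (Set.mem_Ici.2 (le_of_lt hy)) hxy hs ht hst
  have h2 := strictConcaveOn_log_Ioi.2 hx hy hxy hs ht hst
  simp only [Set.mem_Ioi, smul_eq_mul] at *
  have hz : 0 < s * x + t * y := by positivity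
  rw [Real.log_div hx.ne' hk.ne', Real.log_div hy.ne' hk.ne', Real.log_div hz.ne' hk.ne']
  have h3 := mul_lt_mul_of_pos_left h2 hk
  linarith

/-- For every level `c`, the equation `f x = c` has at most two solutions in `(0, A)`,
where `f x = x·log(x/b) − b·log x − T·log(A − x) + (A − x)·log((A − x)/T)`. -/
theorem f_at_most_two_roots
    (b T A : ℝ) (hb : 0 < b) (hT : 0 < T) (hA0 : 0 < A) (hA1 : A ≤ 1)
    (f : ℝ → ℝ)
    (hf : ∀ x, f x = x * Real.log (x / b) - b * Real.log x -
        T * Real.log (A - x) + (A - x) * Real.log ((A - x) / T)) :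
    ∀ c : ℝ, ({x ∈ Set.Ioo (0 : ℝ) A | f x = c}).encard ≤ 2 := by
  intro c
  have key : ∀ x y z : ℝ, x ∈ Set.Ioo 0 A → z ∈ Set.Ioo 0 A → x < y → y < z →
      f x = c → f y = c → f z = c → False := by
    rintro x y z ⟨hx0, hxA⟩ ⟨hz0, hzA⟩ hxy hyz ex ey ez
    have hzx : 0 < z - x := by linarith
    obtain ⟨s, t, hs, ht, hst, hy⟩ : ∃ s t : ℝ, 0 < s ∧ 0 < t ∧ s + t = 1 ∧ s * x + t * z = y :=
      ⟨(z - y) / (z - x), (y - x) / (z - x), div_pos (by linarith) hzx,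
        div_pos (by linarith) hzx, by field_simp; ring, by field_simp; ring⟩
    have h1 := (g_strict b hb).2 (Set.mem_Ioi.2 hx0) (Set.mem_Ioi.2 hz0)
      (by linarith : x < z).ne hs ht hst
    have h2 := (g_strict T hT).2 (Set.mem_Ioi.2 (sub_pos.2 hxA)) (Set.mem_Ioi.2 (sub_pos.2 hzA))
      (by intro h; linarith) hs ht hst
    simp only [smul_eq_mul] at h1 h2
    have hy2 : s * (A - x) + t * (A - z) = A - y := by
      rw [← hy]; linear_combination A * hst
    rw [hy2] at h2
    rw [hy] at h1
    rw [hf] at ex ey ez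
    have : s * c + t * c = c := by rw [← add_mul, hst, one_mul]
    have e1 := congrArg (s * ·) ex
    have e2 := congrArg (t * ·) ez
    linarith
  by_contra! h
  have h3 : (3 : ℕ∞) ≤ ({x ∈ Set.Ioo (0 : ℝ) A | f x = c}).encard := by
    have := Order.add_one_le_of_lt h
    norm_num at this
    exact this
  obtain ⟨u, hu, hu3⟩ := Set.exists_subset_encard_eq h3
  obtain ⟨x, y, z, hxy, hxz, hyz, rfl⟩ := Set.encard_eq_three.1 hu3
  obtain ⟨hx, ex⟩ := hu (show x ∈ _ by simp)
  obtain ⟨hy, ey⟩ := hu (show y ∈ _ by simp)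
  obtain ⟨hz, ez⟩ := hu (show z ∈ _ by simp)
  rcases lt_or_gt_of_ne hxy with h1 | h1 <;> rcases lt_or_gt_of_ne hxz with h2 | h2 <;>
    rcases lt_or_gt_of_ne hyz with h3 | h3
  · exact key x y z hx hz h1 h3 ex ey ez
  · exact key x z y hx hy h2 h3 ex ez ey
  · linarith
  · exact key z x y hz hy h2 h1 ez ex ey
  · exact key y x z hy hz h1 h2 ey ex ez
  · linarith
  · exact key y z x hy hx h3 h2 ey ez ex
  · exact key z y x hz hx h3 h1 ez ey ex
end

section
/- Let b > 0, T > 0, and 0 < A ≤ 1 be real numbers, and define f : (0, A) → ℝ by f(x) = x·log(x/b) − b·log x − T·log(A − x) + (A − x)·log((A − x)/T). Then for every real number c, the sublevel set {x ∈ (0, A) : f(x) ≤ c} is either empty or equal to a closed bounded interval [r₁, r₂] with 0 < r₁ ≤ r₂ < A. -/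
open Real

lemma aux_conv (β : ℝ) (hβ : 0 < β) :
    ConvexOn ℝ (Set.Ioi 0) (fun x : ℝ => x * Real.log x + (-Real.log β) * x - β * Real.log x) := by
  refine ⟨convex_Ioi 0, ?_⟩
  intro x hx y hy p q hp hq hpq
  have h1 := Real.convexOn_mul_log.2 (Set.Ioi_subset_Ici_self hx)
    (Set.Ioi_subset_Ici_self hy) hp hq hpq
  have h2 := strictConcaveOn_log_Ioi.concaveOn.2 hx hy hp hq hpq
  simp only [smul_eq_mul] at *
  have h3 := mul_le_mul_of_nonneg_left h2 hβ.le
  linarith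

lemma aux_bound (β x : ℝ) (hx : 0 < x) (hx1 : x ≤ 1) :
    -1 - |Real.log β| ≤ x * Real.log x + (-Real.log β) * x := by
  have h1 : x - 1 ≤ x * Real.log x := by
    have h := Real.one_sub_inv_le_log_of_pos hx
    have h' := mul_le_mul_of_nonneg_left h hx.le
    have : x * (1 - x⁻¹) = x - 1 := by field_simp
    linarith
  have h2 : Real.log β * x ≤ |Real.log β| := by
    calc Real.log β * x ≤ |Real.log β| * x := mul_le_mul_of_nonneg_right (le_abs_self _) hx.le
      _ ≤ |Real.log β| := mul_le_of_le_one_right (abs_nonneg _) hx1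
  linarith

/-- For every level `c`, the sublevel set `{x ∈ (0, A) : f x ≤ c}` of
`f x = x·log(x/b) − b·log x − T·log(A − x) + (A − x)·log((A − x)/T)` is either empty or a
closed bounded interval `[r₁, r₂]` with `0 < r₁ ≤ r₂ < A`. -/
theorem f_sublevel_set_interval
    (b T A : ℝ) (hb : 0 < b) (hT : 0 < T) (hA0 : 0 < A) (hA1 : A ≤ 1)
    (f : ℝ → ℝ)
    (hf : ∀ x, f x = x * Real.log (x / b) - b * Real.log x -
        T * Real.log (A - x) + (A - x) * Real.log ((A - x) / T)) :
    ∀ c : ℝ, {x ∈ Set.Ioo (0 : ℝ) A | f x ≤ c} = ∅ ∨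
      ∃ r₁ r₂ : ℝ, 0 < r₁ ∧ r₁ ≤ r₂ ∧ r₂ < A ∧
        {x ∈ Set.Ioo (0 : ℝ) A | f x ≤ c} = Set.Icc r₁ r₂ := by
  intro c
  have hf' : ∀ x ∈ Set.Ioo (0:ℝ) A, f x =
      (x * Real.log x + (-Real.log b) * x - b * Real.log x) +
      ((A - x) * Real.log (A - x) + (-Real.log T) * (A - x) - T * Real.log (A - x)) := by
    rintro x ⟨h0, h1⟩
    have h2 : 0 < A - x := by linarith
    rw [hf, Real.log_div h0.ne' hb.ne', Real.log_div h2.ne' hT.ne']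
    ring
  set S := {x ∈ Set.Ioo (0 : ℝ) A | f x ≤ c} with hS
  rcases S.eq_empty_or_nonempty with he | hne
  · exact Or.inl he
  right
  have hconv : Convex ℝ S := by
    rintro x ⟨hx, hxc⟩ y ⟨hy, hyc⟩ p q hp hq hpq
    have hz := convex_Ioo (0:ℝ) A hx hy hp hq hpq
    refine ⟨hz, ?_⟩
    have h1 := (aux_conv b hb).2 (show x ∈ Set.Ioi 0 from hx.1) (show y ∈ Set.Ioi 0 from hy.1)
      hp hq hpq
    have h2 := (aux_conv T hT).2 (show A - x ∈ Set.Ioi 0 from sub_pos.2 hx.2)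
      (show A - y ∈ Set.Ioi 0 from sub_pos.2 hy.2) hp hq hpq
    have e : p • (A - x) + q • (A - y) = A - (p • x + q • y) := by
      simp only [smul_eq_mul]
      linear_combination A * hpq
    rw [e] at h2
    rw [hf' _ hx] at hxc
    rw [hf' _ hy] at hyc
    rw [hf' _ hz]
    have h3 := mul_le_mul_of_nonneg_left hxc hp
    have h4 := mul_le_mul_of_nonneg_left hyc hq
    have h5 : p * c + q * c = c := by rw [← add_mul, hpq, one_mul]
    simp only [smul_eq_mul] at *
    linarith
  obtain ⟨K, hK⟩ : ∃ K, K = (-1 - |Real.log b|) + (-1 - |Real.log T|) := ⟨_, rfl⟩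
  have hbd : ∀ x ∈ S, Real.exp ((K - c) / b) ≤ x ∧ x ≤ A - Real.exp ((K - c) / T) := by
    rintro x ⟨hx, hxc⟩
    have hx2 : 0 < A - x := sub_pos.2 hx.2
    have h1 := aux_bound b x hx.1 (by linarith [hx.2])
    have h2 := aux_bound T (A - x) hx2 (by linarith [hx.1])
    have l1 := mul_nonpos_of_nonneg_of_nonpos hb.le
      (Real.log_nonpos hx.1.le (by linarith [hx.2]))
    have l2 := mul_nonpos_of_nonneg_of_nonpos hT.le
      (Real.log_nonpos hx2.le (by linarith [hx.1]))
    rw [hf' _ hx] at hxc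
    constructor
    · rw [← Real.le_log_iff_exp_le hx.1, div_le_iff₀ hb]
      linarith
    · have : Real.exp ((K - c) / T) ≤ A - x := by
        rw [← Real.le_log_iff_exp_le hx2, div_le_iff₀ hT]
        linarith
      linarith
  have e1 := Real.exp_pos ((K - c) / b)
  have e2 := Real.exp_pos ((K - c) / T)
  have hcomp : IsCompact S := by
    have hSe : S = Set.Icc (Real.exp ((K - c) / b)) (A - Real.exp ((K - c) / T)) ∩
        f ⁻¹' Set.Iic c := by
      ext x
      constructor
      · intro hx
        exact ⟨hbd x hx, hx.2⟩
      · rintro ⟨⟨h1, h2⟩, h3⟩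
        exact ⟨⟨by linarith, by linarith⟩, h3⟩
    rw [hSe]
    refine isCompact_Icc.of_isClosed_subset ?_ Set.inter_subset_left
    refine ContinuousOn.preimage_isClosed_of_isClosed ?_ isClosed_Icc isClosed_Iic
    have hfe : f = _ := funext hf
    rw [hfe]
    intro x hx
    have p1 : 0 < x := lt_of_lt_of_le e1 hx.1
    have p2 : 0 < A - x := by linarith [hx.2]
    have p3 := (div_pos p1 hb).ne'
    have p4 := (div_pos p2 hT).ne'
    have p5 := p1.ne'
    have p6 := p2.ne'
    apply ContinuousAt.continuousWithinAt
    fun_prop (disch := assumption)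
  have hI := eq_Icc_of_connected_compact ⟨hne, hconv.isPreconnected⟩ hcomp
  have m1 := hcomp.sInf_mem hne
  have m2 := hcomp.sSup_mem hne
  exact ⟨sInf S, sSup S, m1.1.1, csInf_le hcomp.bddBelow m2, m2.1.2, hI⟩
end
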